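/- Let G be a finite undirected multigraph. A subset A of edges of G is a flat of the graphic matroid M(G) whose restriction M(G)|A is a connected matroid if and only if A = E(S) for some subset S of vertices inducing a 2-connected subgraph of G, where S is the set of all endpoints of edges of A and E(S) denotes the set of all edges of G with both endpoints in S. -/

import Mathlib

/-!
Forests are exactly the edge sets whose columns in the incidence matrix over `𝔽₂` are linearly
independent, so the graphic matroid is a Mathlib matroid `cycleMatroid G`, and an edge is in the
closure of `A` iff its endpoints are joined by edges of `A` (`mem_closure_iff_reachable`). Flats, and
circuits through a spanned edge, are thereby controlled by reachability alone.

Let `A` be a connected flat with set of endpoints `S`. A partition of `A` into two nonempty classes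
of edges sharing at most one vertex `w` is impossible, because a circuit meeting both classes would
remain dependent after contracting one side to `w` (`ConnectedRestriction.meets_of_closed`). Hence
`S` stays connected inside `A` after deleting any vertex, or none, and flatness gives `A = E(S)`.

Conversely let `G[S]` be `2`-connected. Then `E(S)` is a flat because edges leaving `S` cannot be
spanned. Two edges `vx`, `vy` of `E(S)` at a common vertex lie on a common circuit because `x` and
`y` are joined in `S \ {v}`. Lying on a common circuit is transitive by strong circuit elimination
(`exists_isCircuit_trans`), so connectedness of `G[S]` extends this to all pairs of edges.
-/

open SimpleGraph
open scoped Pointwise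

namespace Gor

/-! ### Graph-theoretic notions -/

/-- A graph is `2`-connected if it is connected and remains connected after deletion of any
single vertex.  A single edge `K₂` counts as `2`-connected. -/
def IsTwoConnected {V : Type*} (G : SimpleGraph V) : Prop :=
  G.Connected ∧ ∀ v : V, (G.induce {u : V | u ≠ v}).Connected

/-- `E(S)`: the set of edges of `G` with both endpoints in `S`. -/
def edgesIn {V : Type*} (G : SimpleGraph V) (S : Set V) : Set (Sym2 V) :=
  {e ∈ G.edgeSet | ∀ v ∈ e, v ∈ S}

/-- The simple graph obtained from `G` by contracting all edges in `F`: its vertices are the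
connected components of the graph with edge set `F`, two being adjacent if some edge of `G`
joins them. -/
def contractEdges {V : Type*} (G : SimpleGraph V) (F : Set (Sym2 V)) :
    SimpleGraph (SimpleGraph.fromEdgeSet F).ConnectedComponent :=
  SimpleGraph.fromRel fun c d => ∃ u v : V, G.Adj u v ∧
    (SimpleGraph.fromEdgeSet F).connectedComponentMk u = c ∧
    (SimpleGraph.fromEdgeSet F).connectedComponentMk v = d

/-- `S` is a good flat of `G`: the induced subgraph `G[S]` is `2`-connected and the contraction
of all edges of `E(S)` in `G` is `2`-connected. -/
def IsGoodFlat {V : Type*} (G : SimpleGraph V) (S : Set V) : Prop :=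
  IsTwoConnected (G.induce S) ∧ IsTwoConnected (contractEdges G (edgesIn G S))

/-- The weight function `w : E → {1, δ-1}` with `w e = 1` whenever `G∖e` is `2`-connected and
`w e = δ - 1` whenever `G/e` is `2`-connected. -/
def IsCanonicalWeight {V : Type*} (G : SimpleGraph V) (δ : ℕ) (w : Sym2 V → ℕ) : Prop :=
  (∀ e ∈ G.edgeSet, w e = 1 ∨ w e = δ - 1) ∧
  (∀ e ∈ G.edgeSet, IsTwoConnected (G.deleteEdges {e}) → w e = 1) ∧
  (∀ e ∈ G.edgeSet, IsTwoConnected (contractEdges G {e}) → w e = δ - 1)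

/-- A `2`-connected graph `G` satisfies `(♠)_δ` via the weight function `w`. -/
def SatisfiesSpade {V : Type*} (G : SimpleGraph V) (δ : ℕ) (w : Sym2 V → ℕ) : Prop :=
  IsTwoConnected G ∧ IsCanonicalWeight G δ w ∧
  (∑ᶠ e ∈ G.edgeSet, w e) = δ * (Nat.card V - 1) ∧
  ∀ S : Set V, IsGoodFlat G S → (∑ᶠ e ∈ edgesIn G S, w e) + 1 = δ * (S.ncard - 1)

/-- The number of `2`-connected components (blocks) of a graph: the number of inclusion-maximal
vertex subsets inducing a `2`-connected subgraph. -/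
noncomputable def numBlocks {V : Type*} (G : SimpleGraph V) : ℕ :=
  {S : Set V | IsTwoConnected (G.induce S) ∧
    ∀ T : Set V, S ⊆ T → IsTwoConnected (G.induce T) → S = T}.ncard

/-! ### Lattice polytopes and the Gorenstein property -/

/-- A point of `ℝ^η` is a lattice point if all its coordinates are integers. -/
def IsLatticePoint {η : Type*} (x : η → ℝ) : Prop := ∀ i, ∃ z : ℤ, x i = z

/-- The cone over a polytope `P ⊆ ℝ^η`, living in `ℝ^η × ℝ`. -/
def coneOver {η : Type*} (P : Set (η → ℝ)) : Set ((η → ℝ) × ℝ) :=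
  {y | ∃ t : ℝ, ∃ p ∈ P, 0 ≤ t ∧ y = (t • p, t)}

/-- The lattice affinely spanned by the lattice points of `P`, placed at height one;
i.e. the subgroup of `ℝ^η × ℝ` generated by `{(p, 1) : p a lattice point of P}`. -/
def coneLattice {η : Type*} (P : Set (η → ℝ)) : Submodule ℤ ((η → ℝ) × ℝ) :=
  Submodule.span ℤ {y | ∃ p ∈ P, IsLatticePoint p ∧ y = (p, 1)}

/-- `h` is a linear form cutting out a facet-supporting hyperplane of the cone over `P`:
it is nonnegative on the cone and vanishes on a subset of the cone spanning one dimension less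
than the cone itself. -/
def IsFacetForm {η : Type*} (P : Set (η → ℝ)) (h : ((η → ℝ) × ℝ) →ₗ[ℝ] ℝ) : Prop :=
  (∀ y ∈ coneOver P, 0 ≤ h y) ∧
  Module.finrank ℝ (Submodule.span ℝ {y ∈ coneOver P | h y = 0}) + 1 =
    Module.finrank ℝ (Submodule.span ℝ (coneOver P))

/-- `h` is reduced with respect to the lattice spanned by `P`: it takes integer values on the
lattice and attains the value `1` there. -/
def IsReducedForm {η : Type*} (P : Set (η → ℝ)) (h : ((η → ℝ) × ℝ) →ₗ[ℝ] ℝ) : Prop :=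
  (∀ y ∈ coneLattice P, ∃ z : ℤ, h y = z) ∧ ∃ y ∈ coneLattice P, h y = 1

/-- A polytope `P`, regarded as full-dimensional in the affine lattice it spans, is
`δ`-Gorenstein if there is a lattice point `v ∈ δP` with `h (v, δ) = 1` for the reduced
equation `h` of every facet-supporting hyperplane of the cone over `P`. -/
def IsDeltaGorenstein {η : Type*} (P : Set (η → ℝ)) (δ : ℕ) : Prop :=
  ∃ v : η → ℝ, v ∈ (δ : ℝ) • P ∧ (v, (δ : ℝ)) ∈ coneLattice P ∧
    ∀ h : ((η → ℝ) × ℝ) →ₗ[ℝ] ℝ, IsFacetForm P h → IsReducedForm P h → h (v, (δ : ℝ)) = 1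

/-- A polytope is Gorenstein if it is `δ`-Gorenstein for some positive integer `δ`. -/
def IsGorenstein {η : Type*} (P : Set (η → ℝ)) : Prop :=
  ∃ δ : ℕ, 0 < δ ∧ IsDeltaGorenstein P δ

/-! ### Graphic matroids of simple graphs and their polytopes -/

/-- An independent set of the graphic matroid of `G`: a set of edges forming a forest. -/
def IsGraphicIndep {V : Type*} (G : SimpleGraph V) (I : Set (Sym2 V)) : Prop :=
  I ⊆ G.edgeSet ∧ (SimpleGraph.fromEdgeSet I).IsAcyclic

/-- A basis of the graphic matroid of `G`: a maximal forest (spanning forest). -/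
def IsGraphicBasis {V : Type*} (G : SimpleGraph V) (B : Set (Sym2 V)) : Prop :=
  IsGraphicIndep G B ∧ ∀ e ∈ G.edgeSet, e ∉ B → ¬ IsGraphicIndep G (insert e B)

/-- The base polytope `B(M(G))` of the graphic matroid of `G`: the convex hull of the
indicator vectors of the bases. -/
def basePolytope {V : Type*} (G : SimpleGraph V) : Set (Sym2 V → ℝ) :=
  convexHull ℝ {x | ∃ B : Set (Sym2 V), IsGraphicBasis G B ∧
    x = B.indicator fun _ => (1 : ℝ)}

/-- The base polytope `B(M(G))`, regarded inside `ℝ^E` where `E` is the edge set of `G`. -/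
def basePolytopeE {V : Type*} (G : SimpleGraph V) : Set (↥G.edgeSet → ℝ) :=
  convexHull ℝ {x | ∃ B : Set (Sym2 V), IsGraphicBasis G B ∧
    x = (Subtype.val ⁻¹' B).indicator fun _ => (1 : ℝ)}

/-- A homogeneous inequality `g x ≥ 0` is valid for `P` and defines a facet (a supporting
hyperplane whose intersection with `P` has affine dimension one less than `P`). -/
def IsSupportingFaceIneq {α : Type*} (P : Set (α → ℝ)) (g : (α → ℝ) → ℝ) : Prop :=
  (∀ x ∈ P, 0 ≤ g x) ∧
  Module.finrank ℝ (vectorSpan ℝ {x ∈ P | g x = 0}) + 1 =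
    Module.finrank ℝ (vectorSpan ℝ P)

/-! ### Multigraphs -/

/-- A finite undirected loopless multigraph on a vertex type `V` with edge type `E`. -/
structure Multigraph (V E : Type*) where
  ends : E → Sym2 V
  loopless : ∀ e, ¬ (ends e).IsDiag

/-- The underlying simple graph of a multigraph. -/
def Multigraph.toSimple {V E : Type*} (G : Multigraph V E) : SimpleGraph V :=
  SimpleGraph.fromEdgeSet (Set.range G.ends)

/-- `E(S)` for a multigraph: the set of edges with both endpoints in `S`. -/
def Multigraph.edgesIn {V E : Type*} (G : Multigraph V E) (S : Set V) : Set E :=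
  {e | ∀ v ∈ G.ends e, v ∈ S}

/-- A set of edges of a multigraph is a forest (an independent set of the graphic matroid):
no two parallel edges and no cycle. -/
def IsMultiForest {V E : Type*} (G : Multigraph V E) (I : Set E) : Prop :=
  Set.InjOn G.ends I ∧ (SimpleGraph.fromEdgeSet (G.ends '' I)).IsAcyclic

/-- The independence polytope `P(M(G))` of the graphic matroid of a multigraph `G`. -/
def multiIndepPolytope {V E : Type*} (G : Multigraph V E) : Set (E → ℝ) :=
  convexHull ℝ {x | ∃ I : Set E, IsMultiForest G I ∧ x = I.indicator fun _ => (1 : ℝ)}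

/-- The rank of a set of edges in the graphic matroid of a multigraph. -/
noncomputable def mrank {V E : Type*} (G : Multigraph V E) (A : Set E) : ℕ :=
  sSup {n | ∃ I ⊆ A, IsMultiForest G I ∧ I.ncard = n}

/-- A flat of the graphic matroid of a multigraph: adding any further edge increases the rank. -/
def IsGraphicFlat {V E : Type*} (G : Multigraph V E) (A : Set E) : Prop :=
  ∀ e : E, e ∉ A → mrank G (insert e A) ≠ mrank G A

/-- A circuit of the graphic matroid of a multigraph: a minimal dependent set of edges. -/
def IsMultiCircuit {V E : Type*} (G : Multigraph V E) (C : Set E) : Prop :=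
  ¬ IsMultiForest G C ∧ ∀ C' ⊂ C, IsMultiForest G C'

/-- The restriction of the graphic matroid of `G` to `A` is a connected matroid:
`A` is nonempty and any two distinct elements of `A` lie on a common circuit inside `A`. -/
def ConnectedRestriction {V E : Type*} (G : Multigraph V E) (A : Set E) : Prop :=
  A.Nonempty ∧ ∀ e ∈ A, ∀ f ∈ A, e ≠ f → ∃ C ⊆ A, IsMultiCircuit G C ∧ e ∈ C ∧ f ∈ C

/-- `G` is the `m`-blow-up of the simple graph `H`: every edge of `H` is replaced by exactly
`m` parallel edges and there are no other edges. -/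
def IsBlowUp {V E : Type*} (G : Multigraph V E) (m : ℕ) (H : SimpleGraph V) : Prop :=
  (∀ p ∈ H.edgeSet, {e : E | G.ends e = p}.ncard = m) ∧
  ∀ p : Sym2 V, p ∉ H.edgeSet → {e : E | G.ends e = p} = ∅

/-- The condition `(♣)_δ`: `(δ-1)|E(S)| + 1 = δ(|S|-1)` for every vertex subset `S` inducing a
`2`-connected subgraph. -/
def ClubCond {V : Type*} (H : SimpleGraph V) (δ : ℕ) : Prop :=
  ∀ S : Set V, IsTwoConnected (H.induce S) →
    (δ - 1) * (edgesIn H S).ncard + 1 = δ * (S.ncard - 1)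

/-! ### Chordality, `K₄` minors, cycle attachments -/

/-- A chordless cycle: a cycle such that every edge of `G` between vertices of the cycle is an
edge of the cycle. -/
def IsChordlessCycle {V : Type*} (G : SimpleGraph V) {v : V} (c : G.Walk v v) : Prop :=
  c.IsCycle ∧ ∀ e ∈ edgesIn G {u : V | u ∈ c.support}, e ∈ c.edges

/-- `G` is `δ`-chordal: every cycle without a chord has exactly `δ + 1` edges. -/
def IsDeltaChordal {V : Type*} (G : SimpleGraph V) (δ : ℕ) : Prop :=
  ∀ (v : V) (c : G.Walk v v), IsChordlessCycle G c → c.length = δ + 1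

/-- `G` has a `K₄` minor: there are four disjoint nonempty connected branch sets pairwise
joined by an edge. -/
def HasK4Minor {V : Type*} (G : SimpleGraph V) : Prop :=
  ∃ B : Fin 4 → Set V, (∀ i, (B i).Nonempty) ∧ (∀ i, (G.induce (B i)).Connected) ∧
    (Pairwise fun i j => Disjoint (B i) (B j)) ∧
    (Pairwise fun i j => ∃ u ∈ B i, ∃ v ∈ B j, G.Adj u v)

/-- One step of attaching a new `(δ+1)`-cycle to an edge: `B` is obtained from `A` by adding
`δ - 1` new vertices forming a path of length `δ` between the endpoints of an edge of
`H[A]`, these being all new edges. -/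
def AttachStep {V : Type*} (H : SimpleGraph V) (δ : ℕ) (A B : Set V) : Prop :=
  ∃ q : Fin (δ + 1) → V, Function.Injective q ∧
    H.Adj (q 0) (q (Fin.last δ)) ∧ q 0 ∈ A ∧ q (Fin.last δ) ∈ A ∧
    (∀ i : Fin (δ + 1), i ≠ 0 → i ≠ Fin.last δ → q i ∉ A) ∧
    B = A ∪ {x | ∃ i : Fin (δ + 1), i ≠ 0 ∧ i ≠ Fin.last δ ∧ q i = x} ∧
    edgesIn H B = edgesIn H A ∪ {e | ∃ i : Fin δ, e = s(q i.castSucc, q i.succ)}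

/-- `H` can be constructed from the clique `K₂` by repeatedly attaching new `(δ+1)`-cycles to
edges of the preceding graph. -/
def ConstructibleFromK2 {V : Type*} (H : SimpleGraph V) (δ : ℕ) : Prop :=
  ∃ (k : ℕ) (S : Fin (k + 1) → Set V),
    (∃ u v : V, H.Adj u v ∧ S 0 = {u, v}) ∧
    S (Fin.last k) = Set.univ ∧
    ∀ i : Fin k, AttachStep H δ (S i.castSucc) (S i.succ)

/-! ### Gluings, subdivisions, collisions, ears -/

/-- `G` (with distinguished edge `ab`) is the gluing of the graphs `Gs i` along the edges
`es i`: the disjoint union with all the edges `es i` identified to the single edge `ab`. -/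
def IsGluing {ι : Type*} {Vf : ι → Type*} {W : Type*} (Gs : ∀ i, SimpleGraph (Vf i))
    (es : ∀ i, Sym2 (Vf i)) (G : SimpleGraph W) (a b : W) : Prop :=
  a ≠ b ∧ G.Adj a b ∧
  ∃ φ : ∀ i, Vf i → W,
    (∀ i, Function.Injective (φ i)) ∧
    (∀ x : W, ∃ i, x ∈ Set.range (φ i)) ∧
    (∀ i, Sym2.map (φ i) (es i) = s(a, b)) ∧
    (∀ i j, i ≠ j → Set.range (φ i) ∩ Set.range (φ j) = {a, b}) ∧
    ∀ x y : W, G.Adj x y ↔ ∃ i, ∃ u v, (Gs i).Adj u v ∧ φ i u = x ∧ φ i v = y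

/-- `G'` together with the path `q` is the subdivision of `G` obtained by replacing the edge
`uv` by a path of `m` edges `q 0, …, q m` through new vertices. -/
def IsSubdivisionAt {V W : Type*} (G : SimpleGraph V) (u v : V) {m : ℕ}
    (G' : SimpleGraph W) (q : Fin (m + 1) → W) : Prop :=
  ∃ φ : V → W, Function.Injective φ ∧ Function.Injective q ∧
    q 0 = φ u ∧ q (Fin.last m) = φ v ∧
    (∀ i : Fin (m + 1), i ≠ 0 → i ≠ Fin.last m → q i ∉ Set.range φ) ∧
    (∀ x : W, x ∈ Set.range φ ∨ x ∈ Set.range q) ∧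
    ∀ x y : W, G'.Adj x y ↔
      ((∃ a b : V, G.Adj a b ∧ s(a, b) ≠ s(u, v) ∧ φ a = x ∧ φ b = y) ∨
       ∃ i : Fin m, s(x, y) = s(q i.castSucc, q i.succ))

/-- `G` (with the distinguished nonadjacent pair `a b`) is the collision of `G₁` and `G₂` on
the edges `e₁, e₂`: the disjoint union with `e₁` and `e₂` identified and then deleted. -/
def IsCollision {V₁ V₂ W : Type*} (G₁ : SimpleGraph V₁) (G₂ : SimpleGraph V₂)
    (e₁ : Sym2 V₁) (e₂ : Sym2 V₂) (G : SimpleGraph W) (a b : W) : Prop :=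
  a ≠ b ∧ ¬ G.Adj a b ∧
  ∃ (φ₁ : V₁ → W) (φ₂ : V₂ → W),
    Function.Injective φ₁ ∧ Function.Injective φ₂ ∧
    Sym2.map φ₁ e₁ = s(a, b) ∧ Sym2.map φ₂ e₂ = s(a, b) ∧
    (∀ x : W, x ∈ Set.range φ₁ ∨ x ∈ Set.range φ₂) ∧
    Set.range φ₁ ∩ Set.range φ₂ = {a, b} ∧
    ∀ x y : W, G.Adj x y ↔
      ((∃ u v, G₁.Adj u v ∧ s(u, v) ≠ e₁ ∧ φ₁ u = x ∧ φ₁ v = y) ∨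
       (∃ u v, G₂.Adj u v ∧ s(u, v) ≠ e₂ ∧ φ₂ u = x ∧ φ₂ v = y))

/-- The inner vertices of an ear. -/
def earInner {V : Type*} {s : ℕ} (p : Fin (s + 1) → V) : Set V :=
  {x | ∃ i : Fin (s + 1), i ≠ 0 ∧ i ≠ Fin.last s ∧ p i = x}

/-- The edges of an ear. -/
def earEdges {V : Type*} {s : ℕ} (p : Fin (s + 1) → V) : Set (Sym2 V) :=
  {e | ∃ i : Fin s, e = s(p i.castSucc, p i.succ)}

/-- An `s`-ear of `G`: a path with `s` edges whose inner vertices have degree `2` in `G`. -/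
def IsEar {V : Type*} (G : SimpleGraph V) {s : ℕ} (p : Fin (s + 1) → V) : Prop :=
  Function.Injective p ∧ (∀ i : Fin s, G.Adj (p i.castSucc) (p i.succ)) ∧
  ∀ i : Fin (s + 1), i ≠ 0 → i ≠ Fin.last s → (G.neighborSet (p i)).ncard = 2

/-- `T` is the vertex set of an inclusion-maximal proper `2`-connected induced subgraph. -/
def IsMaxProperTwoConnected {V : Type*} (G : SimpleGraph V) (T : Set V) : Prop :=
  IsTwoConnected (G.induce T) ∧ T ≠ Set.univ ∧
  ∀ T' : Set V, T ⊆ T' → T' ≠ Set.univ → IsTwoConnected (G.induce T') → T' = T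

/-! ### `(♠)₂` and `3`-connectivity -/

/-- A `2`-connected graph satisfies the equalities `(♠)₂`:
`|E| = 2(|V|-1)` and `|E(S)| = 2|S| - 3` for every good flat `S`. -/
def Spade2 {V : Type*} (G : SimpleGraph V) : Prop :=
  IsTwoConnected G ∧ G.edgeSet.ncard = 2 * (Nat.card V - 1) ∧
  ∀ S : Set V, IsGoodFlat G S → (edgesIn G S).ncard = 2 * S.ncard - 3

/-- A graph is `3`-connected if it has more than `3` vertices and remains connected after
deletion of any two vertices. -/
def IsThreeConnected {V : Type*} (G : SimpleGraph V) : Prop :=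
  3 < Nat.card V ∧ ∀ u v : V, (G.induce {x : V | x ≠ u ∧ x ≠ v}).Connected

/-! ### Inductive constructions -/

/-- Graphs obtainable from the `δ`-cycle by gluings (Proposition `construction1`) and
`(δ-1)`-subdivisions (Proposition `construction2`). -/
inductive Obtainable (δ : ℕ) : {W : Type} → SimpleGraph W → Prop
  | cycle {W : Type} (G : SimpleGraph W) (e : G ≃g SimpleGraph.cycleGraph δ) :
      Obtainable δ G
  | glue {Vf : Fin (δ - 1) → Type} {W : Type}
      (Gs : ∀ i, SimpleGraph (Vf i)) (ws : ∀ i, Sym2 (Vf i) → ℕ) (es : ∀ i, Sym2 (Vf i))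
      (G : SimpleGraph W) (a b : W)
      (hob : ∀ i, Obtainable δ (Gs i))
      (hsp : ∀ i, SatisfiesSpade (Gs i) δ (ws i))
      (hes : ∀ i, es i ∈ (Gs i).edgeSet)
      (hwe : ∀ i, ws i (es i) = δ - 1)
      (hgl : IsGluing Gs es G a b) : Obtainable δ G
  | subdivide {V W : Type} (G : SimpleGraph V) (w : Sym2 V → ℕ) (u v : V)
      (G' : SimpleGraph W) (q : Fin (δ - 1 + 1) → W)
      (hob : Obtainable δ G) (hsp : SatisfiesSpade G δ w)
      (huv : G.Adj u v) (hw1 : w s(u, v) = 1)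
      (hsub : IsSubdivisionAt G u v G' q) : Obtainable δ G'

/-- Graphs obtainable from the clique `K₄` by a finite sequence of collisions. -/
inductive ObtainableK4 : {W : Type} → SimpleGraph W → Prop
  | k4 {W : Type} (G : SimpleGraph W) (e : G ≃g (⊤ : SimpleGraph (Fin 4))) :
      ObtainableK4 G
  | collide {V₁ V₂ W : Type} (G₁ : SimpleGraph V₁) (G₂ : SimpleGraph V₂)
      (e₁ : Sym2 V₁) (e₂ : Sym2 V₂) (G : SimpleGraph W) (a b : W)
      (h₁ : ObtainableK4 G₁) (h₂ : ObtainableK4 G₂)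
      (he₁ : e₁ ∈ G₁.edgeSet) (he₂ : e₂ ∈ G₂.edgeSet)
      (hc : IsCollision G₁ G₂ e₁ e₂ G a b) : ObtainableK4 G

section Helpers

open Set

variable {V E : Type*}

/-! ### Reachability and forests -/

/-- The simple graph on `V` spanned by the edge set `A`, with parallel edges identified. -/
def edgeGraph (G : Multigraph V E) (A : Set E) : SimpleGraph V :=
  SimpleGraph.fromEdgeSet (G.ends '' A)

theorem edgeGraph_adj {G : Multigraph V E} {A : Set E} {x y : V} :
    (edgeGraph G A).Adj x y ↔ ∃ e ∈ A, G.ends e = s(x, y) := by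
  rw [edgeGraph, SimpleGraph.fromEdgeSet_adj]
  constructor
  · rintro ⟨⟨e, he, h⟩, -⟩
    exact ⟨e, he, h⟩
  · rintro ⟨e, he, h⟩
    refine ⟨⟨e, he, h⟩, fun hxy => G.loopless e ?_⟩
    rw [h, hxy]; simp

theorem edgeGraph_mono {G : Multigraph V E} {A B : Set E} (h : A ⊆ B) :
    edgeGraph G A ≤ edgeGraph G B :=
  SimpleGraph.fromEdgeSet_mono (image_mono h)

theorem edgeGraph_univ (G : Multigraph V E) : edgeGraph G univ = G.toSimple := by
  rw [edgeGraph, image_univ]; rfl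

/-- A vertex map that sends edges of `K` to reachable pairs of `L` preserves reachability. Edges may
be collapsed, so `r` need not be a graph homomorphism. -/
theorem reachable_map {W W' : Type*} {K : SimpleGraph W} {L : SimpleGraph W'} (r : W → W')
    (h : ∀ a b, K.Adj a b → L.Reachable (r a) (r b)) {x y : W} (hxy : K.Reachable x y) :
    L.Reachable (r x) (r y) := by
  obtain ⟨p⟩ := hxy
  induction p with
  | nil => exact .refl _
  | cons hab _ ih => exact (h _ _ hab).trans ih

theorem reachable_closed {W : Type*} {K : SimpleGraph W} {P : W → Prop}
    (h : ∀ a b, K.Adj a b → P a → P b) {x y : W} (hxy : K.Reachable x y) (hx : P x) : P y := by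
  obtain ⟨p⟩ := hxy
  induction p with
  | nil => exact hx
  | cons hab _ ih => exact ih (h _ _ hab hx)

theorem exists_ends (G : Multigraph V E) (e : E) : ∃ x y, G.ends e = s(x, y) := by
  induction h : G.ends e with | _ x y => exact ⟨x, y, rfl⟩

/-- The column of `e` in the incidence matrix over `𝔽₂`: the sum of the two endpoints of `e`. -/
noncomputable def edgeVec (G : Multigraph V E) (e : E) : V →₀ ZMod 2 :=
  Sym2.lift ⟨fun u v => Finsupp.single u 1 + Finsupp.single v 1, fun _ _ => add_comm _ _⟩ (G.ends e)

theorem edgeVec_eq {G : Multigraph V E} {e : E} {u v : V} (h : G.ends e = s(u, v)) :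
    edgeVec G e = Finsupp.single u 1 + Finsupp.single v 1 := by
  rw [edgeVec, h, Sym2.lift_mk]

/-- The vector `u + v` lies in the span of the columns of `A` iff `A` contains a walk from `u` to
`v`: sum the columns along the walk; conversely, the functional adding up the coordinates over the
component of `u` kills every column of `A`. -/
theorem mem_span_iff_reachable (G : Multigraph V E) (A : Set E) (u v : V) :
    (Finsupp.single u 1 + Finsupp.single v 1 : V →₀ ZMod 2) ∈
      Submodule.span (ZMod 2) (edgeVec G '' A) ↔ (edgeGraph G A).Reachable u v := by
  classical
  have two : ∀ w : V, (Finsupp.single w 1 + Finsupp.single w 1 : V →₀ ZMod 2) = 0 := by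
    intro w
    rw [← Finsupp.single_add, show (1 + 1 : ZMod 2) = 0 from rfl, Finsupp.single_zero]
  constructor
  · intro h
    let φ : (V →₀ ZMod 2) →ₗ[ZMod 2] ZMod 2 :=
      Finsupp.lsum (ZMod 2) fun w =>
        if (edgeGraph G A).Reachable u w then LinearMap.id else 0
    have hφ : ∀ w, φ (Finsupp.single w 1) = if (edgeGraph G A).Reachable u w then 1 else 0 := by
      intro w
      simp only [φ, Finsupp.lsum_single]
      split_ifs <;> simp
    have hker : Submodule.span (ZMod 2) (edgeVec G '' A) ≤ LinearMap.ker φ := by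
      rw [Submodule.span_le]
      rintro _ ⟨e, he, rfl⟩
      obtain ⟨x, y, hxy⟩ : ∃ x y, G.ends e = s(x, y) := exists_ends G e
      have hadj : (edgeGraph G A).Adj x y := edgeGraph_adj.2 ⟨e, he, hxy⟩
      have : (edgeGraph G A).Reachable u x ↔ (edgeGraph G A).Reachable u y :=
        ⟨fun h => h.trans hadj.reachable, fun h => h.trans hadj.symm.reachable⟩
      rw [SetLike.mem_coe, LinearMap.mem_ker, edgeVec_eq hxy, map_add, hφ, hφ]
      simp only [this]
      split_ifs <;> rfl
    have h0 := hker h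
    rw [LinearMap.mem_ker, map_add, hφ, hφ, if_pos (.refl _)] at h0
    by_contra hv
    rw [if_neg hv] at h0
    exact absurd h0 (by decide)
  · rintro ⟨p⟩
    induction p with
    | nil => rw [two]; exact zero_mem _
    | @cons x y z hxy _ ih =>
      obtain ⟨e, he, hends⟩ := edgeGraph_adj.1 hxy
      have hmem := Submodule.subset_span (R := ZMod 2) (mem_image_of_mem (edgeVec G) he)
      rw [edgeVec_eq hends] at hmem
      have := add_mem hmem ih
      rwa [add_assoc, ← add_assoc (Finsupp.single y 1), two, zero_add] at this

theorem isMultiForest_insert_iff {G : Multigraph V E} {I : Set E} {e : E} {u v : V}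
    (he : e ∉ I) (h : G.ends e = s(u, v)) :
    IsMultiForest G (insert e I) ↔ IsMultiForest G I ∧ ¬ (edgeGraph G I).Reachable u v := by
  have huv : u ≠ v := fun huv => G.loopless e (by rw [h, huv]; simp)
  have hgr : SimpleGraph.fromEdgeSet (G.ends '' insert e I) =
      edgeGraph G I ⊔ SimpleGraph.edge u v := by
    rw [SimpleGraph.edge, edgeGraph, ← SimpleGraph.fromEdgeSet_union, image_insert_eq, h,
      union_singleton]
  rw [IsMultiForest, IsMultiForest, hgr, SimpleGraph.isAcyclic_sup_fromEdgeSet_iff,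
    injOn_insert he]
  constructor
  · rintro ⟨⟨hinj, hnot⟩, hac, hr⟩
    refine ⟨⟨hinj, hac⟩, fun hreach => ?_⟩
    obtain h1 | h1 := hr hreach
    · exact huv h1
    · obtain ⟨f, hf, hfe⟩ := edgeGraph_adj.1 h1
      exact hnot ⟨f, hf, hfe.trans h.symm⟩
  · rintro ⟨⟨hinj, hac⟩, hr⟩
    refine ⟨⟨hinj, ?_⟩, hac, fun h => absurd h hr⟩
    rintro ⟨f, hf, hfe⟩
    exact hr (edgeGraph_adj.2 ⟨f, hf, hfe.trans h⟩).reachable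

/-- The incidence matrix over `𝔽₂` represents the graphic matroid. -/
theorem isMultiForest_iff_linearIndepOn [Finite E] (G : Multigraph V E) (I : Set E) :
    IsMultiForest G I ↔ LinearIndepOn (ZMod 2) (edgeVec G) I := by
  induction I, I.toFinite using Set.Finite.induction_on with
  | empty => simp [IsMultiForest]
  | @insert e I he _ ih =>
    obtain ⟨u, v, h⟩ := exists_ends G e
    rw [isMultiForest_insert_iff he h, ih, linearIndepOn_insert he, edgeVec_eq h,
      mem_span_iff_reachable]

/-- The graphic matroid `M(G)` as a Mathlib `Matroid`: the ground set is all of `E`, and a set is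
independent iff it is a forest. -/
noncomputable def cycleMatroid [Finite E] (G : Multigraph V E) : Matroid E :=
  (IndepMatroid.ofFinite (E := univ) finite_univ (IsMultiForest G)
    (by rw [isMultiForest_iff_linearIndepOn]; exact linearIndepOn_empty _ _)
    (fun I J hJ hIJ => by
      rw [isMultiForest_iff_linearIndepOn] at hJ ⊢
      exact hJ.mono hIJ)
    (fun I J hI hJ hlt => by
      by_contra! hcon
      simp only [isMultiForest_iff_linearIndepOn] at hI hJ hcon
      have hspan : edgeVec G '' J ⊆ Submodule.span (ZMod 2) (edgeVec G '' I) := by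
        rintro _ ⟨e, heJ, rfl⟩
        by_cases heI : e ∈ I
        · exact Submodule.subset_span (mem_image_of_mem _ heI)
        · by_contra hnot
          exact hcon e heJ heI (hI.insert hnot)
      have : Fintype I := Fintype.ofFinite _
      have : Fintype J := Fintype.ofFinite _
      have hcI := finrank_span_eq_card hI
      have hcJ := finrank_span_eq_card hJ
      have hrange : ∀ K : Set E, range (fun x : K => edgeVec G x) = edgeVec G '' K := fun K => by
        rw [image_eq_range]
      rw [hrange, ← Nat.card_eq_fintype_card] at hcI hcJ
      have : FiniteDimensional (ZMod 2) (Submodule.span (ZMod 2) (edgeVec G '' I)) :=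
        FiniteDimensional.span_of_finite _ (toFinite _)
      have hle := Submodule.finrank_mono (Submodule.span_le.2 hspan)
      rw [hcI, hcJ, Nat.card_coe_set_eq, Nat.card_coe_set_eq] at hle
      exact absurd hlt (not_lt.2 hle))
    (fun _ _ => subset_univ _)).matroid

/-! ### The graphic matroid as a Mathlib matroid -/

section Matroid

variable [Finite E] {G : Multigraph V E}

theorem cycleMatroid_indep {I : Set E} : (cycleMatroid G).Indep I ↔ IsMultiForest G I := Iff.rfl

theorem cycleMatroid_ground : (cycleMatroid G).E = univ := rfl

theorem cycleMatroid_isCircuit {C : Set E} :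
    (cycleMatroid G).IsCircuit C ↔ IsMultiCircuit G C := by
  rw [Matroid.isCircuit_iff_forall_ssubset, Matroid.Dep, cycleMatroid_ground,
    and_iff_left (subset_univ C)]
  rfl

/-- An edge is spanned by `A` iff `A` joins its endpoints. -/
theorem mem_closure_iff_reachable {A : Set E} {e : E} {u v : V} (h : G.ends e = s(u, v)) :
    e ∈ (cycleMatroid G).closure A ↔ (edgeGraph G A).Reachable u v := by
  have key : ∀ {I : Set E} (f : E) {x y : V}, (cycleMatroid G).Indep I → G.ends f = s(x, y) →
      (f ∈ (cycleMatroid G).closure I ↔ (edgeGraph G I).Reachable x y) := by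
    intro I f x y hI hf
    by_cases hfI : f ∈ I
    · exact iff_of_true (Matroid.mem_closure_of_mem _ hfI (subset_univ _))
        (edgeGraph_adj.2 ⟨f, hfI, hf⟩).reachable
    · have h1 := hI.insert_indep_iff_of_notMem hfI
      rw [cycleMatroid_indep, isMultiForest_insert_iff hfI hf,
        and_iff_right (cycleMatroid_indep.1 hI), cycleMatroid_ground, mem_sdiff,
        and_iff_right (mem_univ f)] at h1
      exact (not_iff_not.1 h1).symm
  obtain ⟨I, hI⟩ := (cycleMatroid G).exists_isBasis A (subset_univ _)
  rw [← hI.closure_eq_closure, key e hI.indep h]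
  refine ⟨fun hr => hr.mono (edgeGraph_mono hI.subset), reachable_map id ?_⟩
  intro a b hab
  obtain ⟨f, hfA, hf⟩ := edgeGraph_adj.1 hab
  exact (key f hI.indep hf).1 (hI.subset_closure hfA)

/-- The supremum defining `mrank` is attained by a basis of `A`. -/
theorem coe_mrank (A : Set E) : (mrank G A : ℕ∞) = (cycleMatroid G).eRk A := by
  obtain ⟨I, hI⟩ := (cycleMatroid G).exists_isBasis A (subset_univ _)
  have hgreat : IsGreatest {n | ∃ I ⊆ A, IsMultiForest G I ∧ I.ncard = n} I.ncard := by
    refine ⟨⟨I, hI.subset, hI.indep, rfl⟩, ?_⟩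
    rintro _ ⟨J, hJA, hJ, rfl⟩
    have := (cycleMatroid_indep.2 hJ).encard_le_eRk_of_subset hJA
    rw [← hI.encard_eq_eRk, ← J.toFinite.cast_ncard_eq, ← I.toFinite.cast_ncard_eq] at this
    exact_mod_cast this
  rw [mrank, hgreat.csSup_eq, ← hI.encard_eq_eRk, I.toFinite.cast_ncard_eq]

theorem isGraphicFlat_iff {A : Set E} :
    IsGraphicFlat G A ↔ ∀ e, e ∈ (cycleMatroid G).closure A → e ∈ A := by
  refine forall_congr' fun e => ?_
  rw [not_imp_comm, ne_eq, not_not, ← ENat.natCast_inj, coe_mrank, coe_mrank]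
  refine imp_congr_left ⟨fun h => ?_, fun h => ?_⟩
  · by_contra hcl
    have h1 := Matroid.eRk_insert_eq_add_one (M := cycleMatroid G) (e := e) (X := A)
      ⟨mem_univ e, hcl⟩
    rw [h, ← coe_mrank] at h1
    norm_cast at h1
    omega
  · rw [← Matroid.eRk_closure_eq, Matroid.closure_insert_eq_of_mem_closure h,
      Matroid.eRk_closure_eq]

end Matroid

/-! ### Common circuits -/

/-- Lying on a common circuit is transitive. If neither circuit contains both `e` and `g`, strong
elimination of a common element `f` yields circuits `C' ∋ e` and `D' ∋ g` inside `(C ∪ D) \ {f}`.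
Either `C, D'` or `C', D'` is again a pair of meeting circuits, with a strictly smaller union. -/
theorem exists_isCircuit_trans {α : Type*} [Finite α] {M : Matroid α} {e g : α} {C D : Set α}
    (hC : M.IsCircuit C) (hD : M.IsCircuit D) (heC : e ∈ C) (hgD : g ∈ D)
    (hCD : (C ∩ D).Nonempty) : ∃ K ⊆ C ∪ D, M.IsCircuit K ∧ e ∈ K ∧ g ∈ K := by
  induction hn : (C ∪ D).ncard using Nat.strong_induction_on generalizing C D with
  | _ n ih =>
    subst hn
    by_cases heD : e ∈ D
    · exact ⟨D, subset_union_right, hD, heD, hgD⟩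
    by_cases hgC : g ∈ C
    · exact ⟨C, subset_union_left, hC, heC, hgC⟩
    obtain ⟨f, hfC, hfD⟩ := hCD
    obtain ⟨C', hC'ss, hC', heC'⟩ := hC.strong_elimination hD hfC hfD heC heD
    obtain ⟨D', hD'ss, hD', hgD'⟩ := hD.strong_elimination hC hfD hfC hgD hgC
    rw [union_comm D C] at hD'ss
    have hfC' : f ∉ C' := fun h => (hC'ss h).2 rfl
    have hfD' : f ∉ D' := fun h => (hD'ss h).2 rfl
    have hC'C : ¬ C' ⊆ C := fun hss =>
      hfC' (hC'.eq_of_subset_isCircuit hC hss ▸ hfC)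
    have hD'D : ¬ D' ⊆ D := fun hss =>
      hfD' (hD'.eq_of_subset_isCircuit hD hss ▸ hfD)
    have step : ∀ {X Y : Set α}, M.IsCircuit X → M.IsCircuit Y → e ∈ X → g ∈ Y →
        (X ∩ Y).Nonempty → X ∪ Y ⊂ C ∪ D → ∃ K ⊆ C ∪ D, M.IsCircuit K ∧ e ∈ K ∧ g ∈ K := by
      intro X Y hX hY heX hgY hXY hss
      obtain ⟨K, hK, h⟩ := ih _ (ncard_lt_ncard hss) hX hY heX hgY hXY rfl
      exact ⟨K, hK.trans hss.subset, h⟩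
    have hC'U : C' ⊆ C ∪ D := hC'ss.trans sdiff_subset
    have hD'U : D' ⊆ C ∪ D := hD'ss.trans sdiff_subset
    -- `C` and `D'` always meet; if they cover `C ∪ D`, then `D' ⊇ D \ C`, so `C'` meets `D'`.
    by_cases hcov : C ∪ D' = C ∪ D
    · obtain ⟨x, hxC', hxC⟩ := not_subset.1 hC'C
      have hxD' : x ∈ D' := by
        have : x ∈ C ∪ D' := hcov ▸ hC'U hxC'
        exact this.resolve_left hxC
      refine step hC' hD' heC' hgD' ⟨x, hxC', hxD'⟩ ⟨union_subset hC'U hD'U, fun hss => ?_⟩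
      exact (hss (Or.inl hfC)).elim hfC' hfD'
    · obtain ⟨x, hxD', hxD⟩ := not_subset.1 hD'D
      have hxC : x ∈ C := (hD'U hxD').resolve_right hxD
      exact step hC hD' heC hgD' ⟨x, hxC, hxD'⟩
        ((union_subset subset_union_left hD'U).ssubset_of_ne hcov)

/-! ### Connected flats are `2`-connected -/

/-- If the edges of `A` leave the vertex set `T` only towards a single vertex `w`, then either no edge
or every edge of a connected restriction `A` meets `T`. For a circuit `C` through an edge `e` that
meets `T` and an edge that does not, contracting `V \ T` to `w` turns the path `C \ {e}` between the
endpoints of `e` into one using only edges meeting `T`, contradicting the independence of the proper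
subset of `C` formed by the edges meeting `T`. -/
theorem ConnectedRestriction.meets_of_closed [Finite E] {G : Multigraph V E} {A : Set E}
    (hA : ConnectedRestriction G A) {T : Set V} {w : V} (hw : w ∉ T)
    (hT : ∀ a b, (edgeGraph G A).Adj a b → a ∈ T → b ∈ T ∨ b = w)
    {e : E} (he : e ∈ A) (heT : ∃ x ∈ G.ends e, x ∈ T) {f : E} (hf : f ∈ A) :
    ∃ x ∈ G.ends f, x ∈ T := by
  classical
  by_contra hfT
  have hne : e ≠ f := fun h => hfT (h ▸ heT)
  obtain ⟨C, hCA, hC, heC, hfC⟩ := hA.2 e he f hf hne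
  rw [← cycleMatroid_isCircuit] at hC
  set X : Set E := {h | ∃ x ∈ G.ends h, x ∈ T}
  have hind : (cycleMatroid G).Indep (C ∩ X) :=
    hC.ssubset_indep ⟨inter_subset_left, fun h => hfT (h hfC).2⟩
  have hcl := hC.mem_closure_sdiff_singleton_of_mem heC
  obtain ⟨u, v, huv⟩ := exists_ends G e
  rw [mem_closure_iff_reachable huv] at hcl
  -- The retraction fixes both endpoints of each edge meeting `T` and collapses all other edges.
  let r : V → V := fun x => if x ∈ T then x else w
  have hr : ∀ h ∈ A, h ∈ X → ∀ a b, G.ends h = s(a, b) → r a = a ∧ r b = b := by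
    rintro h hhA ⟨x, hx, hxT⟩ a b hab
    have hadj : (edgeGraph G A).Adj a b := edgeGraph_adj.2 ⟨h, hhA, hab⟩
    have hfix : ∀ y, y ∈ T ∨ y = w → r y = y := by
      rintro y (hy | rfl)
      · exact if_pos hy
      · exact if_neg hw
    rw [hab, Sym2.mem_iff] at hx
    obtain rfl | rfl := hx
    · exact ⟨hfix _ (.inl hxT), hfix _ (hT _ _ hadj hxT)⟩
    · exact ⟨hfix _ (hT _ _ hadj.symm hxT), hfix _ (.inl hxT)⟩
  have hreach : (edgeGraph G ((C ∩ X) \ {e})).Reachable (r u) (r v) := by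
    refine reachable_map r (fun a b hab => ?_) hcl
    obtain ⟨h, ⟨hhC, hhe⟩, hends⟩ := edgeGraph_adj.1 hab
    by_cases hhX : h ∈ X
    · obtain ⟨ha, hb⟩ := hr h (hCA hhC) hhX a b hends
      rw [ha, hb]
      exact SimpleGraph.Adj.reachable (edgeGraph_adj.2 ⟨h, ⟨⟨hhC, hhX⟩, hhe⟩, hends⟩)
    · have ha : a ∉ T := fun ha => hhX ⟨a, by simp [hends], ha⟩
      have hb : b ∉ T := fun hb => hhX ⟨b, by simp [hends], hb⟩
      simp only [r, if_neg ha, if_neg hb]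
      exact .refl _
  obtain ⟨hu, hv⟩ := hr e he heT u v huv
  rw [hu, hv, ← mem_closure_iff_reachable huv] at hreach
  exact hind.notMem_closure_sdiff_of_mem ⟨heC, heT⟩ hreach

/-- Within a connected restriction `A`, deleting at most one vertex does not disconnect the remaining
endpoints. Both parts of `2`-connectedness follow, with `W = ∅` and `W = {v}`. -/
theorem ConnectedRestriction.reachable_avoiding [Finite E] {G : Multigraph V E} {A : Set E}
    (hA : ConnectedRestriction G A) {W : Set V} (hW : W.Subsingleton) {x y : V}
    (hx : ∃ e ∈ A, x ∈ G.ends e) (hy : ∃ e ∈ A, y ∈ G.ends e) (hxW : x ∉ W) (hyW : y ∉ W) :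
    (edgeGraph G {e ∈ A | ∀ v ∈ G.ends e, v ∉ W}).Reachable x y := by
  set K := edgeGraph G {e ∈ A | ∀ v ∈ G.ends e, v ∉ W}
  by_contra hxy
  set T : Set V := {z | K.Reachable x z}
  have hTW : ∀ z ∈ T, z ∉ W := by
    intro z hz
    refine reachable_closed (P := (· ∉ W)) (fun a b hab _ => ?_) hz hxW
    obtain ⟨h, ⟨-, hh⟩, hends⟩ := edgeGraph_adj.1 hab
    exact hh b (by simp [hends])
  have hadjK : ∀ a b, (edgeGraph G A).Adj a b → a ∉ W → b ∉ W → K.Adj a b := by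
    intro a b hab ha hb
    obtain ⟨h, hhA, hends⟩ := edgeGraph_adj.1 hab
    refine edgeGraph_adj.2 ⟨h, ⟨hhA, ?_⟩, hends⟩
    rw [hends]
    rintro v hv
    obtain rfl | rfl := Sym2.mem_iff.1 hv
    exacts [ha, hb]
  -- When `W` is empty, any vertex outside `T` serves as the vertex `w` of `meets_of_closed`.
  obtain ⟨w, hwT, hwW⟩ : ∃ w, w ∉ T ∧ W ⊆ {w} := by
    obtain rfl | ⟨w, rfl⟩ := hW.eq_empty_or_singleton
    · exact ⟨y, hxy, empty_subset _⟩
    · exact ⟨w, fun h => hTW w h rfl, subset_rfl⟩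
  have hT : ∀ a b, (edgeGraph G A).Adj a b → a ∈ T → b ∈ T ∨ b = w := by
    intro a b hab ha
    by_cases hb : b ∈ W
    · exact .inr (hwW hb)
    · exact .inl (ha.trans (hadjK a b hab (hTW a ha) hb).reachable)
  obtain ⟨e, heA, hxe⟩ := hx
  obtain ⟨f, hfA, hyf⟩ := hy
  obtain ⟨z, hzf, hzT⟩ := hA.meets_of_closed hwT hT heA ⟨x, hxe, .refl _⟩ hfA
  have hzy : z ≠ y := fun h => hxy (h ▸ hzT)
  have hadj : (edgeGraph G A).Adj z y :=
    edgeGraph_adj.2 ⟨f, hfA, (Sym2.mem_and_mem_iff hzy).1 ⟨hzf, hyf⟩⟩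
  exact hxy (hzT.trans (hadjK z y hadj (hTW z hzT) hyW).reachable)

/-- Reachability lifts along an injection whose image is closed under adjacency. -/
theorem reachable_lift {W W' : Type*} {K : SimpleGraph W} {L : SimpleGraph W'} {r : W' → W}
    (hr : Function.Injective r)
    (h : ∀ a b, K.Adj (r a) b → ∃ b', r b' = b ∧ L.Adj a b') {x y : W'}
    (hxy : K.Reachable (r x) (r y)) : L.Reachable x y := by
  obtain ⟨z, hz, hxz⟩ : ∃ z, r z = r y ∧ L.Reachable x z := by
    refine reachable_closed (P := fun b => ∃ z, r z = b ∧ L.Reachable x z) ?_ hxy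
      ⟨x, rfl, .refl _⟩
    rintro _ b hab ⟨a, rfl, ha⟩
    obtain ⟨b', rfl, hab'⟩ := h a b hab
    exact ⟨b', rfl, ha.trans hab'.reachable⟩
  exact hr hz ▸ hxz

theorem ConnectedRestriction.isTwoConnected [Finite E] {G : Multigraph V E} {A : Set E}
    (hA : ConnectedRestriction G A) :
    IsTwoConnected (G.toSimple.induce {v | ∃ e ∈ A, v ∈ G.ends e}) := by
  have hsub : ∀ (B : Set E) a b, (edgeGraph G B).Adj a b → G.toSimple.Adj a b := by
    intro B a b hab
    rw [← edgeGraph_univ]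
    exact edgeGraph_mono (subset_univ B) hab
  obtain ⟨e, heA⟩ := hA.1
  obtain ⟨p, q, hpq⟩ := exists_ends G e
  have hne : p ≠ q := fun h => G.loopless e (by rw [hpq, h]; simp)
  have hp : p ∈ {v | ∃ e ∈ A, v ∈ G.ends e} := ⟨e, heA, by simp [hpq]⟩
  have hq : q ∈ {v | ∃ e ∈ A, v ∈ G.ends e} := ⟨e, heA, by simp [hpq]⟩
  constructor
  · have : Nonempty {v | ∃ e ∈ A, v ∈ G.ends e} := ⟨⟨p, hp⟩⟩
    refine ⟨fun x y => reachable_lift Subtype.val_injective ?_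
      (hA.reachable_avoiding subsingleton_empty x.2 y.2 (notMem_empty _) (notMem_empty _))⟩
    intro a b hab
    obtain ⟨h, ⟨hhA, -⟩, hends⟩ := edgeGraph_adj.1 hab
    exact ⟨⟨b, h, hhA, by simp [hends]⟩, rfl, hsub _ _ _ hab⟩
  · intro v
    have : Nonempty {u : {v | ∃ e ∈ A, v ∈ G.ends e} | u ≠ v} := by
      by_cases hpv : p = v
      · exact ⟨⟨⟨q, hq⟩, fun h => hne (hpv.trans (congrArg Subtype.val h).symm)⟩⟩
      · exact ⟨⟨⟨p, hp⟩, fun h => hpv (congrArg Subtype.val h)⟩⟩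
    refine ⟨fun x y => reachable_lift (r := fun z => z.1.1)
      (Subtype.val_injective.comp Subtype.val_injective) ?_
      (hA.reachable_avoiding (W := {v.1}) (x := x.1.1) (y := y.1.1)
        subsingleton_singleton x.1.2 y.1.2
        (fun h => x.2 (Subtype.ext h)) (fun h => y.2 (Subtype.ext h)))⟩
    intro a b hab
    obtain ⟨h, ⟨hhA, hhv⟩, hends⟩ := edgeGraph_adj.1 hab
    exact ⟨⟨⟨b, h, hhA, by simp [hends]⟩,
      fun hbv => hhv b (by simp [hends]) (congrArg Subtype.val hbv)⟩, rfl, hsub _ _ _ hab⟩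

/-- A connected flat contains every edge between its endpoints, since it joins these. -/
theorem eq_edgesIn [Finite E] {G : Multigraph V E} {A : Set E}
    (hflat : IsGraphicFlat G A) (hA : ConnectedRestriction G A) :
    A = G.edgesIn {v | ∃ e ∈ A, v ∈ G.ends e} := by
  refine Subset.antisymm (fun e he v hv => ⟨e, he, hv⟩) (fun e he => ?_)
  obtain ⟨u, v, huv⟩ := exists_ends G e
  refine isGraphicFlat_iff.1 hflat e ((mem_closure_iff_reachable huv).2 ?_)
  exact (hA.reachable_avoiding subsingleton_empty (he u (by simp [huv])) (he v (by simp [huv]))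
    (notMem_empty _) (notMem_empty _)).mono (edgeGraph_mono (sep_subset _ _))

/-! ### `2`-connected subgraphs give connected flats -/

/-- An edge spanned by `E(S)` has both endpoints incident with `E(S)`, hence in `S`. -/
theorem isGraphicFlat_edgesIn [Finite E] (G : Multigraph V E) (S : Set V) :
    IsGraphicFlat G (G.edgesIn S) := by
  refine isGraphicFlat_iff.2 fun e he => ?_
  obtain ⟨u, v, huv⟩ := exists_ends G e
  rw [mem_closure_iff_reachable huv] at he
  have hne : u ≠ v := fun h => G.loopless e (by rw [huv, h]; simp)
  have key : ∀ {a b : V}, a ≠ b → (edgeGraph G (G.edgesIn S)).Reachable a b → a ∈ S := by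
    rintro a b hab ⟨p⟩
    cases p with
    | nil => exact absurd rfl hab
    | cons h _ =>
      obtain ⟨f, hf, hends⟩ := edgeGraph_adj.1 h
      exact hf a (by simp [hends])
  intro z hz
  rw [huv] at hz
  obtain rfl | rfl := Sym2.mem_iff.1 hz
  exacts [key hne he, key hne.symm he.symm]

/-- Any two edges of a `2`-connected induced subgraph lie on a common circuit: this holds for two
edges at a common vertex, and propagates along walks by transitivity. -/
theorem connectedRestriction_edgesIn [Finite E] {G : Multigraph V E} {S : Set V}
    (hS : IsTwoConnected (G.toSimple.induce S)) : ConnectedRestriction G (G.edgesIn S) := by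
  have hadj : ∀ a b : S, (G.toSimple.induce S).Adj a b →
      ∃ e ∈ G.edgesIn S, G.ends e = s(a.1, b.1) := by
    intro a b hab
    rw [SimpleGraph.comap_adj, ← edgeGraph_univ, edgeGraph_adj] at hab
    obtain ⟨e, -, he⟩ := hab
    refine ⟨e, fun v hv => ?_, he⟩
    change G.ends e = s(a.1, b.1) at he
    rw [he] at hv
    obtain rfl | rfl := Sym2.mem_iff.1 hv
    exacts [a.2, b.2]
  constructor
  · obtain ⟨v⟩ := hS.1.nonempty
    obtain ⟨u, hu⟩ := (hS.2 v).nonempty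
    obtain ⟨p⟩ := hS.1.1 u v
    cases p with
    | nil => exact absurd rfl hu
    | cons h _ =>
      obtain ⟨e, he, -⟩ := hadj _ _ h
      exact ⟨e, he⟩
  set R : E → E → Prop := fun e f =>
    e = f ∨ ∃ C ⊆ G.edgesIn S, (cycleMatroid G).IsCircuit C ∧ e ∈ C ∧ f ∈ C
  have trans : ∀ {e f g}, R e f → R f g → R e g := by
    rintro e f g (rfl | ⟨C, hCS, hC, heC, hfC⟩) (rfl | ⟨D, hDS, hD, hfD, hgD⟩)
    · exact .inl rfl
    · exact .inr ⟨D, hDS, hD, hfD, hgD⟩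
    · exact .inr ⟨C, hCS, hC, heC, hfC⟩
    · obtain ⟨K, hK, h⟩ := exists_isCircuit_trans hC hD heC hgD ⟨f, hfC, hfD⟩
      exact .inr ⟨K, hK.trans (union_subset hCS hDS), h⟩
  -- For edges `e = vx` and `f = vy`, a path from `x` to `y` avoiding `v` puts `f` on a circuit
  -- inside the path together with `e` and `f`.
  have local_rel : ∀ v : V, ∀ e ∈ G.edgesIn S, ∀ f ∈ G.edgesIn S,
      v ∈ G.ends e → v ∈ G.ends f → R e f := by
    intro v e he f hf hve hvf
    obtain ⟨x, hx⟩ := Sym2.mem_iff_exists.1 hve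
    obtain ⟨y, hy⟩ := Sym2.mem_iff_exists.1 hvf
    have hxS : x ∈ S := he x (by simp [hx])
    have hyS : y ∈ S := hf y (by simp [hy])
    have hvS : v ∈ S := he v hve
    have hxv : x ≠ v := fun h => G.loopless e (by rw [hx, h]; simp)
    have hyv : y ≠ v := fun h => G.loopless f (by rw [hy, h]; simp)
    by_cases hef : e = f
    · exact .inl hef
    set B : Set E := {g ∈ G.edgesIn S | v ∉ G.ends g}
    have hBxy : (edgeGraph G B).Reachable x y := by
      have h0 := (hS.2 ⟨v, hvS⟩).1 ⟨⟨x, hxS⟩, fun h => hxv (congrArg Subtype.val h)⟩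
        ⟨⟨y, hyS⟩, fun h => hyv (congrArg Subtype.val h)⟩
      refine reachable_map (fun z => z.1.1) (fun a b hab => ?_) h0
      obtain ⟨g, hg, hends⟩ := hadj a.1 b.1 hab
      refine SimpleGraph.Adj.reachable (edgeGraph_adj.2 ⟨g, ⟨hg, fun hv => ?_⟩, hends⟩)
      rw [hends] at hv
      obtain h | h := Sym2.mem_iff.1 hv
      · exact a.2 (Subtype.ext h.symm)
      · exact b.2 (Subtype.ext h.symm)
    have hfcl : f ∈ (cycleMatroid G).closure (insert e B) := by
      rw [mem_closure_iff_reachable hy]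
      exact (edgeGraph_adj.2 ⟨e, mem_insert _ _, hx⟩).reachable.trans
        (hBxy.mono (edgeGraph_mono (subset_insert _ _)))
    have hfB : f ∉ insert e B := by
      rintro (rfl | h)
      exacts [hef rfl, h.2 hvf]
    obtain ⟨C, hCss, hC, hfC⟩ := Matroid.exists_isCircuit_of_mem_closure hfcl hfB
    refine .inr ⟨C, hCss.trans ?_, hC, ?_, hfC⟩
    · rw [insert_subset_iff, insert_subset_iff]
      exact ⟨hf, he, sep_subset _ _⟩
    --  The circuit uses `e`, since otherwise `f` would be its only edge at `v`.
    · by_contra heC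
      have h1 := hC.mem_closure_sdiff_singleton_of_mem hfC
      rw [mem_closure_iff_reachable hy] at h1
      refine reachable_closed (P := (· = v)) (fun a b hab ha => ?_) h1 rfl |> hyv
      obtain ⟨g, ⟨hgC, hgf⟩, hends⟩ := edgeGraph_adj.1 hab
      obtain h | h | h := hCss hgC
      · exact absurd h hgf
      · exact absurd (h ▸ hgC) heC
      · exact absurd (by simp [hends, ← show a = v from ha]) h.2
  intro e he f hf hef
  obtain ⟨p, q, hpq⟩ := exists_ends G e
  obtain ⟨x, y, hxy⟩ := exists_ends G f
  have hpS : p ∈ S := he p (by simp [hpq])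
  have hxS : x ∈ S := hf x (by simp [hxy])
  have hall : ∀ g ∈ G.edgesIn S, x ∈ G.ends g → R e g := by
    refine reachable_closed (P := fun z : S => ∀ g ∈ G.edgesIn S, z.1 ∈ G.ends g → R e g) ?_
      (hS.1.1 ⟨p, hpS⟩ ⟨x, hxS⟩) ?_
    · intro a b hab ha g hg hbg
      obtain ⟨h, hh, hends⟩ := hadj a b hab
      exact trans (ha h hh (by simp [hends])) (local_rel b h hh g hg (by simp [hends]) hbg)
    · exact fun g hg hpg => local_rel p e he g hg (by simp [hpq]) hpg
  obtain h | ⟨C, hCS, hC, h⟩ := hall f hf (by simp [hxy])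
  · exact absurd h hef
  · exact ⟨C, hCS, cycleMatroid_isCircuit.1 hC, h⟩

end Helpers

theorem stmt2 {V E : Type*} [Fintype V] [DecidableEq V] [Fintype E]
    (G : Multigraph V E) (A : Set E) :
    (IsGraphicFlat G A ∧ ConnectedRestriction G A) ↔
      ∃ S : Set V, IsTwoConnected (G.toSimple.induce S) ∧ A = G.edgesIn S ∧
        S = {v : V | ∃ e ∈ A, v ∈ G.ends e} := by
  constructor
  · rintro ⟨hflat, hA⟩
    exact ⟨_, hA.isTwoConnected, eq_edgesIn hflat hA, rfl⟩
  · rintro ⟨S, hS, rfl, -⟩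
    exact ⟨isGraphicFlat_edgesIn G S, connectedRestriction_edgesIn hS⟩

end Gor
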